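/- Let β ∈ ℂ be an algebraic number of degree d with |β| > 1, and suppose that |β'| ≠ 1 for every Galois conjugate β' of β. Then there exists a finite alphabet A ⊂ ℤ such that ℚ(β) = Per_A(β), i.e. every element of the field ℚ(β) admits an eventually periodic (β, A)-representation, and conversely every complex number admitting an eventually periodic (β, A)-representation lies in ℚ(β). -/

import Mathlib

section Helpers

open Polynomial

noncomputable def l1 (p : ℂ[X]) : ℝ := ∑ i ∈ p.support, ‖p.coeff i‖

theorem l1_eq (p : ℂ[X]) (s : Finset ℕ) (h : p.support ⊆ s) :
    l1 p = ∑ i ∈ s, ‖p.coeff i‖ := by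
  apply Finset.sum_subset h
  intro i _ hi
  simpa using hi

theorem l1_nonneg (p : ℂ[X]) : 0 ≤ l1 p := Finset.sum_nonneg fun _ _ => norm_nonneg _

theorem l1_add (p q : ℂ[X]) : l1 (p + q) ≤ l1 p + l1 q := by
  classical
  rw [l1_eq (p + q) (p.support ∪ q.support) support_add,
    l1_eq p (p.support ∪ q.support) Finset.subset_union_left,
    l1_eq q (p.support ∪ q.support) Finset.subset_union_right, ← Finset.sum_add_distrib]
  apply Finset.sum_le_sum
  intro i _
  rw [coeff_add]
  exact norm_add_le _ _

theorem l1_zero : l1 0 = 0 := by simp [l1]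

theorem l1_sum {ι : Type*} (s : Finset ι) (f : ι → ℂ[X]) :
    l1 (∑ i ∈ s, f i) ≤ ∑ i ∈ s, l1 (f i) := by
  classical
  induction s using Finset.induction_on with
  | empty => simp [l1_zero]
  | insert a s ha ih =>
    rw [Finset.sum_insert ha, Finset.sum_insert ha]
    exact (l1_add _ _).trans (by gcongr)

theorem l1_C_mul (c : ℂ) (p : ℂ[X]) : l1 (C c * p) = ‖c‖ * l1 p := by
  rw [l1_eq (C c * p) p.support, l1, Finset.mul_sum]
  · simp
  · intro i hi
    simp only [mem_support_iff, coeff_C_mul] at hi ⊢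
    exact right_ne_zero_of_mul hi

theorem l1_X_pow_mul (n : ℕ) (p : ℂ[X]) : l1 (X ^ n * p) = l1 p := by
  rw [l1_eq (X ^ n * p) (p.support.map (addRightEmbedding n)), Finset.sum_map, l1]
  · simp [coeff_X_pow_mul]
  · intro i hi
    simp only [mem_support_iff, coeff_X_pow_mul'] at hi
    split_ifs at hi with h
    · simp only [Finset.mem_map, mem_support_iff, addRightEmbedding_apply]
      exact ⟨i - n, hi, by omega⟩
    · simp at hi

theorem l1_X_pow (n : ℕ) : l1 (X ^ n) = 1 := by
  have h := l1_X_pow_mul n 1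
  rw [mul_one] at h
  rw [h, l1_eq 1 {0}]
  · simp
  · intro i hi
    by_contra h
    simp only [mem_support_iff, coeff_one] at hi
    simp at h
    simp [h] at hi

theorem l1_mul (p q : ℂ[X]) : l1 (p * q) ≤ l1 p * l1 q := by
  conv_lhs => rw [p.as_sum_support_C_mul_X_pow, Finset.sum_mul]
  refine (l1_sum _ _).trans ?_
  rw [l1, Finset.sum_mul]
  apply le_of_eq
  apply Finset.sum_congr rfl
  intro i _
  rw [mul_assoc, l1_C_mul, l1_X_pow_mul]

def GoodP (f : ℂ[X]) : Prop :=
  ∀ ε : ℝ, 0 < ε → ∃ (h : ℂ[X]) (N : ℕ), l1 (f * h - X ^ N) < ε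

theorem GoodP.mul {f g : ℂ[X]} (hf : GoodP f) (hg : GoodP g) : GoodP (f * g) := by
  intro ε hε
  obtain ⟨h, N, hN⟩ := hf (min 1 (ε / 3)) (by positivity)
  obtain ⟨k, M, hM⟩ := hg (min 1 (ε / 3)) (by positivity)
  refine ⟨h * k, N + M, ?_⟩
  have e : f * g * (h * k) - X ^ (N + M) = X ^ M * (f * h - X ^ N) + (X ^ N * (g * k - X ^ M)
      + (f * h - X ^ N) * (g * k - X ^ M)) := by ring
  rw [e]
  have h1 := l1_add (X ^ M * (f * h - X ^ N)) (X ^ N * (g * k - X ^ M)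
      + (f * h - X ^ N) * (g * k - X ^ M))
  have h2 := l1_add (X ^ N * (g * k - X ^ M)) ((f * h - X ^ N) * (g * k - X ^ M))
  have h3 := l1_mul (f * h - X ^ N) (g * k - X ^ M)
  rw [l1_X_pow_mul] at h1 h2
  have := l1_nonneg (f * h - X ^ N)
  have := l1_nonneg (g * k - X ^ M)
  rw [lt_min_iff] at hN hM
  nlinarith

theorem GoodP.const {c : ℂ} (hc : c ≠ 0) : GoodP (C c) := by
  intro ε hε
  refine ⟨C c⁻¹, 0, ?_⟩
  rw [← C_mul, mul_inv_cancel₀ hc]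
  simpa [l1_zero] using hε

theorem GoodP.lin {b : ℂ} (hb : ‖b‖ ≠ 1) : GoodP (X - C b) := by
  intro ε hε
  rcases lt_or_gt_of_ne hb with h | h
  · obtain ⟨n, hn⟩ := exists_pow_lt_of_lt_one hε h
    refine ⟨∑ i ∈ Finset.range n, X ^ i * (C b) ^ (n - 1 - i), n, ?_⟩
    rw [mul_comm, Commute.geom_sum₂_mul (Commute.all _ _)]
    have : (X ^ n - C b ^ n - X ^ n : ℂ[X]) = C (-b ^ n) * X ^ 0 := by
      simp
    rw [this, l1_C_mul, l1_X_pow]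
    simpa using hn
  · have hb0 : b ≠ 0 := by
      rintro rfl
      simp at h
      linarith
    obtain ⟨n, hn⟩ := exists_pow_lt_of_lt_one hε (y := ‖b⁻¹‖) (by
      rw [norm_inv]; exact inv_lt_one_of_one_lt₀ h)
    refine ⟨(∑ i ∈ Finset.range n, X ^ i * (C b) ^ (n - 1 - i)) * C (-(b⁻¹) ^ n), 0, ?_⟩
    rw [← mul_assoc, mul_comm (X - C b), Commute.geom_sum₂_mul (Commute.all _ _)]
    have e : (C b ^ n * C (b⁻¹ ^ n) : ℂ[X]) = 1 := by
      rw [← C_pow, ← C_mul, ← mul_pow, mul_inv_cancel₀ hb0, one_pow, C_1]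
    have : ((X ^ n - C b ^ n) * C (-(b⁻¹) ^ n) - X ^ 0 : ℂ[X]) = C (-(b⁻¹) ^ n) * X ^ n := by
      rw [C_neg]
      linear_combination e
    rw [this, l1_C_mul, l1_X_pow]
    simpa using hn

theorem goodP_of_roots (f : ℂ[X]) (hf : f ≠ 0) (h : ∀ z, f.eval z = 0 → ‖z‖ ≠ 1) : GoodP f := by
  rw [(IsAlgClosed.splits f).eq_prod_roots]
  apply GoodP.mul (GoodP.const (by simpa using hf))
  have key : ∀ s : Multiset ℂ, (∀ z ∈ s, ‖z‖ ≠ 1) → GoodP (s.map (X - C ·)).prod := by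
    intro s
    induction s using Multiset.induction_on with
    | empty =>
      intro _
      simpa using GoodP.const (one_ne_zero)
    | cons a s ih =>
      intro hs
      rw [Multiset.map_cons, Multiset.prod_cons]
      exact (GoodP.lin (hs a (by simp))).mul (ih fun z hz => hs z (by simp [hz]))
  apply key
  intro z hz
  exact h z (by simpa [hf] using hz)

noncomputable def reP (h : ℂ[X]) : ℂ[X] :=
  ∑ i ∈ h.support, monomial i (((h.coeff i).re : ℝ) : ℂ)

theorem coeff_reP (h : ℂ[X]) (n : ℕ) : (reP h).coeff n = (((h.coeff n).re : ℝ) : ℂ) := by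
  rw [reP, finsetSum_coeff]
  simp only [coeff_monomial]
  rw [Finset.sum_ite_eq']
  split_ifs with hn
  · rfl
  · simp at hn
    simp [hn]

theorem l1_reP (h : ℂ[X]) : l1 (reP h) ≤ l1 h := by
  rw [l1_eq (reP h) h.support, l1]
  · apply Finset.sum_le_sum
    intro i _
    rw [coeff_reP, Complex.norm_real]
    exact Complex.abs_re_le_norm _
  · intro i hi
    rw [mem_support_iff, coeff_reP] at hi
    rw [mem_support_iff]
    intro h0
    simp [h0] at hi

theorem reP_mul (f : ℚ[X]) (h : ℂ[X]) (N : ℕ) :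
    reP (f.map (algebraMap ℚ ℂ) * h - X ^ N) = f.map (algebraMap ℚ ℂ) * reP h - X ^ N := by
  ext n
  rw [coeff_reP, coeff_sub, coeff_sub, coeff_mul, coeff_mul, Complex.sub_re, Complex.re_sum,
    Complex.ofReal_sub, Complex.ofReal_sum]
  congr 1
  · apply Finset.sum_congr rfl
    intro x _
    rw [coeff_reP, coeff_map]
    have : (algebraMap ℚ ℂ) (f.coeff x.1) = (((f.coeff x.1 : ℚ) : ℝ) : ℂ) := by simp
    rw [this, Complex.re_ofReal_mul]
    push_cast; rfl
  · rw [coeff_X_pow]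
    split_ifs <;> simp

theorem approx_rat (h : ℂ[X]) (ε : ℝ) (hε : 0 < ε) :
    ∃ k : ℚ[X], l1 (k.map (algebraMap ℚ ℂ) - reP h) ≤ ε := by
  set c : ℝ := h.support.card + 1
  have hc : 0 < c := by positivity
  have : ∀ i, ∃ r : ℚ, |(r : ℝ) - (h.coeff i).re| < ε / c := by
    intro i
    obtain ⟨r, hr⟩ := exists_rat_near (h.coeff i).re (show 0 < ε / c by positivity)
    exact ⟨r, by rwa [abs_sub_comm]⟩
  choose r hr using this
  refine ⟨∑ i ∈ h.support, monomial i (r i), ?_⟩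
  have e : ((∑ i ∈ h.support, monomial i (r i) : ℚ[X]).map (algebraMap ℚ ℂ) - reP h)
     = ∑ i ∈ h.support, C (((r i - (h.coeff i).re : ℝ)) : ℂ) * X ^ i := by
    rw [reP, Polynomial.map_sum, ← Finset.sum_sub_distrib]
    apply Finset.sum_congr rfl
    intro i _
    rw [map_monomial, ← monomial_sub, C_mul_X_pow_eq_monomial]
    simp
  rw [e]
  refine (l1_sum _ _).trans ?_
  have : ∀ i ∈ h.support, l1 (C (((r i - (h.coeff i).re : ℝ)) : ℂ) * X ^ i) ≤ ε / c := by
    intro i _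
    rw [l1_C_mul, l1_X_pow, Complex.norm_real, mul_one]
    exact (hr i).le
  refine (Finset.sum_le_sum this).trans ?_
  rw [Finset.sum_const, nsmul_eq_mul, mul_div_assoc', div_le_iff₀ hc]
  simp only [c]
  nlinarith

theorem dom_rat (f : ℚ[X]) (h : ∀ z : ℂ, aeval z f = 0 → ‖z‖ ≠ 1) :
    ∃ (k : ℚ[X]) (N : ℕ), l1 ((f * k).map (algebraMap ℚ ℂ) - X ^ N) < 1 / 2 := by
  have hf : f ≠ 0 := by
    rintro rfl
    exact h 1 (by simp) (by simp)
  have hG : GoodP (f.map (algebraMap ℚ ℂ)) := by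
    apply goodP_of_roots
    · exact (Polynomial.map_ne_zero_iff (algebraMap ℚ ℂ).injective).2 hf
    · intro z hz
      apply h z
      rwa [eval_map_algebraMap] at hz
  obtain ⟨u, N, hu⟩ := hG (1 / 4) (by norm_num)
  set F := f.map (algebraMap ℚ ℂ)
  have hF := l1_nonneg F
  obtain ⟨k, hk⟩ := approx_rat u (1 / 4 / (l1 F + 1)) (by positivity)
  refine ⟨k, N, ?_⟩
  have e : (f * k).map (algebraMap ℚ ℂ) - X ^ N = reP (F * u - X ^ N)
      + F * (k.map (algebraMap ℚ ℂ) - reP u) := by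
    rw [reP_mul, Polynomial.map_mul]; ring
  rw [e]
  have h1 := l1_add (reP (F * u - X ^ N)) (F * (k.map (algebraMap ℚ ℂ) - reP u))
  have h2 := l1_reP (F * u - X ^ N)
  have h3 := l1_mul F (k.map (algebraMap ℚ ℂ) - reP u)
  have h4 : l1 F * l1 (k.map (algebraMap ℚ ℂ) - reP u) ≤ 1 / 4 := by
    refine (mul_le_mul_of_nonneg_left hk hF).trans ?_
    rw [mul_div_assoc', div_le_iff₀ (by positivity)]
    linarith
  linarith

theorem dom_int (f : ℚ[X]) (h : ∀ z : ℂ, aeval z f = 0 → ‖z‖ ≠ 1) :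
    ∃ (g : ℤ[X]) (N : ℕ), (∀ z : ℂ, aeval z f = 0 → aeval z g = 0) ∧
      ∑ i ∈ g.support.erase N, |g.coeff i| < g.coeff N := by
  obtain ⟨k, N, hk⟩ := dom_rat f h
  set p := f * k with hp
  obtain ⟨b, hb0, hb⟩ := IsLocalization.integerNormalization_spec (nonZeroDivisors ℤ) p
  have hbz : b ≠ 0 := nonZeroDivisors.ne_zero hb0
  set g0 := IsLocalization.integerNormalization (nonZeroDivisors ℤ) p
  have hc : ∀ i, ((g0.coeff i : ℤ) : ℚ) = b * p.coeff i := by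
    intro i
    have := congrArg (fun r => coeff r i) hb
    simpa [coeff_map, coeff_smul] using this
  have hb2 : (0 : ℝ) < (b : ℝ) ^ 2 := by positivity
  set q : ℂ[X] := p.map (algebraMap ℚ ℂ) - X ^ N with hq
  have hcoeff : ∀ i, (((C b * g0).coeff i : ℤ) : ℂ) = (b : ℂ) ^ 2 * (p.map (algebraMap ℚ ℂ)).coeff i := by
    intro i
    have h1 : ((g0.coeff i : ℤ) : ℂ) = b * ((p.coeff i : ℚ) : ℂ) := by
      exact_mod_cast congrArg (fun r : ℚ => (r : ℂ)) (hc i)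
    rw [coeff_C_mul, Int.cast_mul, h1, coeff_map]
    simp only [eq_ratCast]
    ring
  refine ⟨C b * g0, N, ?_, ?_⟩
  · intro z hz
    rw [aeval_def, ← eval_map]
    have : (C b * g0).map (algebraMap ℤ ℂ) = C ((b : ℂ) ^ 2) * p.map (algebraMap ℚ ℂ) := by
      ext i
      rw [coeff_map, coeff_C_mul (p := p.map _), ← hcoeff i]
      simp
    rw [this, hp, eval_mul, Polynomial.map_mul, eval_mul, eval_map_algebraMap, hz]
    simp
  · classical
    set g := C b * g0
    set s := insert N (q.support ∪ g.support) with hs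
    have hNs : N ∈ s := by simp [hs]
    rw [l1_eq q s (fun i hi => by simp only [hs, Finset.mem_insert, Finset.mem_union]; exact Or.inr (Or.inl hi)),
      ← Finset.add_sum_erase _ _ hNs] at hk
    have h1 : ∀ i ∈ s.erase N, (|g.coeff i| : ℝ) = (b : ℝ) ^ 2 * ‖q.coeff i‖ := by
      intro i hi
      have hiN : i ≠ N := Finset.ne_of_mem_erase hi
      rw [hq, coeff_sub, coeff_X_pow, if_neg hiN, sub_zero]
      have := congrArg norm (hcoeff i)
      rw [norm_mul, norm_pow, Complex.norm_intCast, Complex.norm_intCast, sq_abs] at this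
      exact this
    have h2 : |(g.coeff N : ℝ) - (b : ℝ) ^ 2| = (b : ℝ) ^ 2 * ‖q.coeff N‖ := by
      rw [hq, coeff_sub, coeff_X_pow, if_pos rfl]
      have e : (((g.coeff N : ℝ) - (b : ℝ) ^ 2 : ℝ) : ℂ)
          = (b : ℂ) ^ 2 * ((p.map (algebraMap ℚ ℂ)).coeff N - 1) := by
        rw [mul_sub, ← hcoeff N]; push_cast; ring
      have := congrArg norm e
      rw [norm_mul, norm_pow, Complex.norm_intCast, Complex.norm_real, sq_abs] at this
      exact this
    have h3 : ∑ i ∈ g.support.erase N, (|g.coeff i| : ℝ) ≤ ∑ i ∈ s.erase N, (|g.coeff i| : ℝ) := by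
      apply Finset.sum_le_sum_of_subset_of_nonneg
      · apply Finset.erase_subset_erase
        intro i hi
        simp only [hs, Finset.mem_insert, Finset.mem_union]
        exact Or.inr (Or.inr hi)
      · intros; positivity
    rw [Finset.sum_congr rfl h1, ← Finset.mul_sum] at h3
    have h4 := neg_abs_le ((g.coeff N : ℝ) - (b : ℝ) ^ 2)
    rw [h2] at h4
    have : ∑ i ∈ g.support.erase N, (|g.coeff i| : ℝ) < (g.coeff N : ℝ) := by
      nlinarith
    exact_mod_cast this

theorem dom_inv (β : ℂ) (hβ0 : β ≠ 0)
    (hconj : ∀ z : ℂ, aeval z (minpoly ℚ β) = 0 → ‖z‖ ≠ 1) :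
    ∃ (g : ℤ[X]) (N : ℕ), aeval β⁻¹ g = 0 ∧
      ∑ i ∈ g.support.erase N, |g.coeff i| < g.coeff N := by
  have key : ∀ z : ℂ, z ≠ 0 → (aeval z⁻¹ (minpoly ℚ β).reverse = 0 ↔ aeval z (minpoly ℚ β) = 0) := by
    intro z hz
    let := invertibleOfNonzero hz
    have := eval₂_reverse_eq_zero_iff (algebraMap ℚ ℂ) z (minpoly ℚ β)
    rwa [invOf_eq_inv] at this
  obtain ⟨g, N, hg, hN⟩ := dom_int (minpoly ℚ β).reverse (by
    intro z hz h1
    have hz0 : z ≠ 0 := by rintro rfl; simp at h1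
    have := key z⁻¹ (inv_ne_zero hz0)
    rw [inv_inv] at this
    exact hconj _ (this.1 hz) (by rw [norm_inv, h1, inv_one]))
  exact ⟨g, N, hg _ ((key β hβ0).2 (minpoly.aeval ℚ β)), hN⟩

theorem exists_pow_sub_one (β : ℂ) (hβ0 : β ≠ 0) (halg : IsAlgebraic ℚ β) (q : ℕ) (hq : 0 < q) :
    ∃ n : ℕ, 1 ≤ n ∧ ∃ w ∈ Subring.closure ({β, β⁻¹} : Set ℂ), β ^ n - 1 = q * w := by
  have : NeZero q := ⟨hq.ne'⟩
  set K := IntermediateField.adjoin ℚ ({β} : Set ℂ)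
  have : FiniteDimensional ℚ K := IntermediateField.adjoin.finiteDimensional halg.isIntegral
  set d := Module.finrank ℚ K
  set R := Subring.closure ({β, β⁻¹} : Set ℂ)
  have hβR : β ∈ R := Subring.subset_closure (by simp)
  have hβR' : β⁻¹ ∈ R := Subring.subset_closure (by simp)
  have hβK : β ∈ K := IntermediateField.mem_adjoin_simple_self ℚ β
  set M : Submodule ℤ ℂ := Submodule.span ℤ (Set.range fun i : Fin (q ^ d + 1) => β ^ (i : ℕ))
  have hMR : ∀ m ∈ M, m ∈ R := by
    intro m hm
    induction hm using Submodule.span_induction with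
    | mem x hx => obtain ⟨i, rfl⟩ := hx; exact pow_mem hβR _
    | zero => exact zero_mem _
    | add x y _ _ hx hy => exact add_mem hx hy
    | smul a x _ hx => exact zsmul_mem hx a
  have hMK : ∀ m ∈ M, m ∈ K := by
    intro m hm
    induction hm using Submodule.span_induction with
    | mem x hx => obtain ⟨i, rfl⟩ := hx; exact pow_mem hβK _
    | zero => exact zero_mem _
    | add x y _ _ hx hy => exact add_mem hx hy
    | smul a x _ hx => exact zsmul_mem hx a
  have : Module.Finite ℤ M := Module.Finite.span_of_finite ℤ (Set.finite_range _)
  obtain ⟨k, b⟩ := Module.basisOfFiniteTypeTorsionFree' (R := ℤ) (M := M)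
  have hk : k ≤ d := by
    have h1 : LinearIndependent ℤ (fun i => (b i : ℂ)) :=
      b.linearIndependent.map' M.subtype (by simp)
    have h2 : LinearIndependent ℚ (fun i => (b i : ℂ)) :=
      (LinearIndependent.iff_fractionRing ℤ ℚ).1 h1
    have h3 : LinearIndependent ℚ (fun i => (⟨b i, hMK _ (b i).2⟩ : K)) :=
      LinearIndependent.of_comp K.val.toLinearMap h2
    simpa using h3.fintype_card_le_finrank
  let e : Fin (q ^ d + 1) → M := fun i => ⟨β ^ (i : ℕ), Submodule.subset_span ⟨i, rfl⟩⟩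
  let c : Fin (q ^ d + 1) → (Fin k → ZMod q) := fun i l => ((b.repr (e i) l : ℤ) : ZMod q)
  have hcard : Fintype.card (Fin k → ZMod q) < Fintype.card (Fin (q ^ d + 1)) := by
    simp only [Fintype.card_fun, ZMod.card, Fintype.card_fin]
    exact Nat.lt_succ_of_le (Nat.pow_le_pow_right hq hk)
  obtain ⟨i, j, hij, hc⟩ := Fintype.exists_ne_map_eq_of_card_lt c hcard
  have main : ∀ i j : Fin (q ^ d + 1), c i = c j → j < i → 
      ∃ n : ℕ, 1 ≤ n ∧ ∃ w ∈ R, β ^ n - 1 = q * w := by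
    intro i j hc hlt
    have h1 : ∀ l, ∃ m : ℤ, b.repr (e i) l - b.repr (e j) l = q * m := by
      intro l
      have := congrFun hc l
      simp only [c] at this
      exact (ZMod.intCast_eq_intCast_iff_dvd_sub _ _ _).1 this.symm
    choose m hm using h1
    have h2 : e i - e j = (q : ℤ) • ∑ l, m l • b l := by
      apply b.ext_elem
      intro l
      rw [map_sub, Finsupp.sub_apply, hm l, map_smul, Finsupp.smul_apply, b.repr_sum_self]
      simp
    have h3 : β ^ (i : ℕ) - β ^ (j : ℕ) = q * ((∑ l, m l • b l : M) : ℂ) := by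
      have := congrArg (fun x : M => (x : ℂ)) h2
      simpa [e] using this
    refine ⟨i - j, by have : (j : ℕ) < i := hlt; omega, β⁻¹ ^ (j : ℕ) * ((∑ l, m l • b l : M) : ℂ),
      mul_mem (pow_mem hβR' _) (hMR _ (Subtype.mem _)), ?_⟩
    rw [mul_left_comm, ← h3, mul_sub, ← mul_pow, inv_mul_cancel₀ hβ0, one_pow,
      pow_sub₀ _ hβ0 (le_of_lt hlt), inv_pow, mul_comm]
  rcases lt_or_gt_of_ne hij with h | h
  · exact main j i hc.symm h
  · exact main i j hc h

theorem exists_mul_mem (β : ℂ) (halg : IsAlgebraic ℚ β) (x : ℂ)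
    (hx : x ∈ Subfield.closure ({β} : Set ℂ)) :
    ∃ q : ℕ, 0 < q ∧ q * x ∈ Subring.closure ({β, β⁻¹} : Set ℂ) := by
  have h1 : x ∈ Algebra.adjoin ℚ ({β} : Set ℂ) := by
    rw [← IntermediateField.adjoin_simple_toSubalgebra_of_isAlgebraic halg]
    have : Subfield.closure ({β} : Set ℂ) ≤ (IntermediateField.adjoin ℚ ({β} : Set ℂ)).toSubfield := by
      rw [Subfield.closure_le, Set.singleton_subset_iff]
      exact IntermediateField.mem_adjoin_simple_self ℚ β
    exact this hx
  clear hx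
  induction h1 using Algebra.adjoin_induction with
  | mem y hy =>
    refine ⟨1, one_pos, ?_⟩
    rw [Set.mem_singleton_iff.1 hy]
    simpa using Subring.subset_closure (by simp)
  | algebraMap r =>
    refine ⟨r.den, r.den_pos, ?_⟩
    have : (r.den : ℂ) * algebraMap ℚ ℂ r = (r.num : ℂ) := by
      have := Rat.den_mul_eq_num r
      rw [eq_ratCast]
      exact_mod_cast congrArg (fun r : ℚ => (r : ℂ)) this
    rw [this]
    exact intCast_mem _ _
  | add y z _ _ hy hz =>
    obtain ⟨m, hm, hy⟩ := hy
    obtain ⟨n, hn, hz⟩ := hz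
    refine ⟨m * n, by positivity, ?_⟩
    have : ((m * n : ℕ) : ℂ) * (y + z) = n * (m * y) + m * (n * z) := by push_cast; ring
    rw [this]
    exact add_mem (mul_mem (natCast_mem _ _) hy) (mul_mem (natCast_mem _ _) hz)
  | mul y z _ _ hy hz =>
    obtain ⟨m, hm, hy⟩ := hy
    obtain ⟨n, hn, hz⟩ := hz
    refine ⟨m * n, by positivity, ?_⟩
    have : ((m * n : ℕ) : ℂ) * (y * z) = (m * y) * (n * z) := by push_cast; ring
    rw [this]
    exact mul_mem hy hz

def EvPer (a : ℕ → ℤ) : Prop := ∃ N p : ℕ, 1 ≤ p ∧ ∀ k, N ≤ k → a (k + p) = a k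

theorem EvPer.mul_period {a : ℕ → ℤ} {N p : ℕ} (h : ∀ k, N ≤ k → a (k + p) = a k) (m : ℕ) :
    ∀ k, N ≤ k → a (k + m * p) = a k := by
  induction m with
  | zero => simp
  | succ m ih =>
    intro k hk
    rw [show k + (m + 1) * p = (k + m * p) + p by ring, h _ (by omega), ih k hk]

theorem EvPer.map₂ {a b : ℕ → ℤ} (ha : EvPer a) (hb : EvPer b) (f : ℤ → ℤ → ℤ) :
    EvPer (fun k => f (a k) (b k)) := by
  obtain ⟨N, p, hp, h⟩ := ha
  obtain ⟨M, q, hq, h'⟩ := hb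
  refine ⟨N + M, q * p, Nat.mul_pos hq hp, ?_⟩
  intro k hk
  have h1 := EvPer.mul_period h q k (by omega)
  have h2 := EvPer.mul_period h' p k (by omega)
  simp only
  rw [h1, mul_comm q p, h2]

theorem EvPer.map {a : ℕ → ℤ} (ha : EvPer a) (f : ℤ → ℤ) : EvPer (fun k => f (a k)) :=
  ha.map₂ ha (fun x _ => f x)

theorem EvPer.zero : EvPer (fun _ => 0) := ⟨0, 1, le_rfl, fun _ _ => rfl⟩

theorem EvPer.sum {ι : Type*} (s : Finset ι) (a : ι → ℕ → ℤ) (h : ∀ i, EvPer (a i)) :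
    EvPer (fun k => ∑ i ∈ s, a i k) := by
  classical
  induction s using Finset.induction_on with
  | empty => simpa using EvPer.zero
  | insert i s hi ih =>
    simp only [Finset.sum_insert hi]
    exact (h i).map₂ ih (· + ·)

theorem EvPer.bounded {a : ℕ → ℤ} (ha : EvPer a) : ∃ K : ℕ, ∀ k, |a k| ≤ K := by
  obtain ⟨N, p, hp, h⟩ := ha
  refine ⟨∑ i ∈ Finset.range (N + p), (a i).natAbs, ?_⟩
  intro k
  induction k using Nat.strong_induction_on with
  | _ k ih =>
    by_cases hk : k < N + p
    · have := Finset.single_le_sum (f := fun i => (a i).natAbs) (fun i _ => Nat.zero_le _)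
        (Finset.mem_range.2 hk)
      rw [Int.abs_eq_natAbs]
      exact_mod_cast this
    · have h1 := h (k - p) (by omega)
      rw [Nat.sub_add_cancel (by omega)] at h1
      rw [h1]
      exact ih _ (by omega)

def shf (i : ℕ) (a : ℕ → ℤ) : ℕ → ℤ := fun k => if i ≤ k then a (k - i) else 0

theorem EvPer.shf {a : ℕ → ℤ} (ha : EvPer a) (i : ℕ) : EvPer (shf i a) := by
  obtain ⟨N, p, hp, h⟩ := ha
  refine ⟨N + i, p, hp, ?_⟩
  intro k hk
  simp only [_root_.shf]
  rw [if_pos (by omega), if_pos (by omega), show k + p - i = (k - i) + p by omega, h _ (by omega)]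

theorem hasSum_congr_aux {f g : ℕ → ℂ} {y : ℂ} (h : ∀ k, f k = g k) : HasSum f y ↔ HasSum g y := by
  rw [funext h]

/-- eventually periodic `a` has value `y` at `t` -/
def Val (t : ℂ) (a : ℕ → ℤ) (y : ℂ) : Prop := HasSum (fun k => (a k : ℂ) * t ^ k) y

theorem EvPer.val {a : ℕ → ℤ} (ha : EvPer a) {t : ℂ} (ht : ‖t‖ < 1) :
    Val t a (∑' k, (a k : ℂ) * t ^ k) := by
  obtain ⟨K, hK⟩ := ha.bounded
  apply Summable.hasSum
  apply Summable.of_norm_bounded (g := fun k => (K : ℝ) * ‖t‖ ^ k)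
  · exact (summable_geometric_of_lt_one (norm_nonneg _) ht).mul_left _
  · intro k
    rw [norm_mul, norm_pow, Complex.norm_intCast]
    gcongr
    exact_mod_cast hK k

theorem Val.shf {t : ℂ} {a : ℕ → ℤ} {y : ℂ} (h : Val t a y) (i : ℕ) : Val t (shf i a) (t ^ i * y) := by
  unfold Val at *
  rw [← hasSum_nat_add_iff' i]
  have e : ∑ k ∈ Finset.range i, ((_root_.shf i a k : ℤ) : ℂ) * t ^ k = 0 := by
    apply Finset.sum_eq_zero
    intro k hk
    have : _root_.shf i a k = 0 := by
      unfold _root_.shf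
      rw [if_neg (by simpa using hk)]
    simp [this]
  rw [e, sub_zero]
  refine (hasSum_congr_aux fun k => ?_).2 (h.mul_left (t ^ i))
  have : _root_.shf i a (k + i) = a k := by
    unfold _root_.shf
    rw [if_pos (by omega), Nat.add_sub_cancel]
  rw [this, pow_add]
  ring

theorem Val.add {t : ℂ} {a b : ℕ → ℤ} {y z : ℂ} (h : Val t a y) (h' : Val t b z) :
    Val t (fun k => a k + b k) (y + z) := by
  unfold Val at *
  convert HasSum.add h h' using 1
  funext k
  rw [← add_mul, Int.cast_add]

theorem Val.mul_int {t : ℂ} {a : ℕ → ℤ} {y : ℂ} (h : Val t a y) (c : ℤ) :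
    Val t (fun k => c * a k) (c * y) := by
  unfold Val at *
  refine (hasSum_congr_aux fun k => ?_).2 (HasSum.mul_left (c : ℂ) h)
  push_cast; ring

theorem Val.sum {t : ℂ} {ι : Type*} (s : Finset ι) (a : ι → ℕ → ℤ) (y : ι → ℂ)
    (h : ∀ i, Val t (a i) (y i)) : Val t (fun k => ∑ i ∈ s, a i k) (∑ i ∈ s, y i) := by
  unfold Val at *
  convert hasSum_sum (fun i (_ : i ∈ s) => h i) using 1
  funext k
  push_cast; rw [Finset.sum_mul]

/-- One reduction step. -/
theorem reduce_step (t : ℂ) (ht : ‖t‖ < 1) (g : ℤ[X]) (N : ℕ) (hg : aeval t g = 0)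
    (hN : ∑ i ∈ g.support.erase N, |g.coeff i| < g.coeff N)
    (K : ℕ) (hK : (g.coeff N) ^ 2 ≤ K + 1) (a : ℕ → ℤ) (ha : EvPer a) (hb : ∀ k, |a k| ≤ K + 1)
    (y : ℂ) (hy : Val t a y) :
    ∃ b : ℕ → ℤ, EvPer b ∧ (∀ k, |b k| ≤ K) ∧ Val t b (t ^ N * y) := by
  set B := g.coeff N with hB
  set S := ∑ i ∈ g.support.erase N, |g.coeff i| with hS
  have hS0 : 0 ≤ S := Finset.sum_nonneg fun _ _ => abs_nonneg _
  have hB0 : 0 < B := by omega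
  set q : ℕ → ℤ := fun k => (a k).tdiv B with hq
  have hqE : EvPer q := ha.map (fun x => x.tdiv B)
  set z := ∑' k, (q k : ℂ) * t ^ k
  have hqV : Val t q z := hqE.val ht
  refine ⟨fun k => shf N (fun k => a k + (-B) * q k) k
    + (-1) * ∑ i ∈ g.support.erase N, g.coeff i * shf i q k, ?_, ?_, ?_⟩
  · have h1 := (ha.map₂ hqE (fun x y => x + (-B) * y)).shf N
    have h2 := EvPer.sum (g.support.erase N) (fun i k => g.coeff i * shf i q k)
      (fun i => (hqE.shf i).map (fun x => g.coeff i * x))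
    exact h1.map₂ h2 (fun x y => x + (-1) * y)
  · set Q : ℤ := ((K : ℤ) + 1) / B with hQ
    have hQB : Q * B ≤ K + 1 := Int.ediv_mul_le _ hB0.ne'
    have hQ1 : B ≤ Q := by
      rw [hQ, Int.le_ediv_iff_mul_le hB0]; nlinarith
    have hqb : ∀ k, |q k| ≤ Q := by
      intro k
      rw [hQ, Int.le_ediv_iff_mul_le hB0, Int.abs_eq_natAbs, hq, Int.natAbs_tdiv]
      have h1 := hb k
      rw [Int.abs_eq_natAbs] at h1
      have h2 : (B.natAbs : ℤ) = B := Int.natAbs_of_nonneg hB0.le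
      have h3 := Nat.div_mul_le_self (a k).natAbs B.natAbs
      have h4 : (((a k).natAbs / B.natAbs : ℕ) : ℤ) * (B.natAbs : ℤ) ≤ (a k).natAbs := by
        exact_mod_cast h3
      rw [h2] at h4
      exact h4.trans h1
    have hr : ∀ k, |a k + (-B) * q k| ≤ B - 1 := by
      intro k
      have h1 := Int.mul_tdiv_add_tmod (a k) B
      have h2 : a k + (-B) * q k = (a k).tmod B := by
        simp only [hq]; linarith
      rw [h2, abs_le]
      have h3 := Int.tmod_lt_of_pos (a k) hB0
      have h4 := Int.lt_tmod_of_pos (a k) hB0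
      constructor <;> omega
    intro k
    have h1 : |shf N (fun k => a k + (-B) * q k) k| ≤ B - 1 := by
      unfold shf
      split_ifs
      · exact hr _
      · simp; omega
    have h2 : |∑ i ∈ g.support.erase N, g.coeff i * shf i q k| ≤ S * Q := by
      refine (Finset.abs_sum_le_sum_abs _ _).trans ?_
      rw [hS, Finset.sum_mul]
      apply Finset.sum_le_sum
      intro i _
      rw [abs_mul]
      apply mul_le_mul_of_nonneg_left _ (abs_nonneg _)
      unfold shf
      split_ifs
      · exact hqb _
      · simp; omega
    have h3 : S * Q ≤ (B - 1) * Q := mul_le_mul_of_nonneg_right (by omega) (by omega)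
    refine (abs_add_le _ _).trans ?_
    rw [neg_one_mul, abs_neg]
    nlinarith
  · have h1 := (hy.add (hqV.mul_int (-B))).shf N
    have h2 := Val.sum (g.support.erase N) (fun i k => g.coeff i * shf i q k)
      (fun i => g.coeff i * (t ^ i * z)) (fun i => (hqV.shf i).mul_int (g.coeff i))
    have h3 := h1.add (h2.mul_int (-1))
    convert h3 using 1
    have hNs : N ∈ g.support := by rw [mem_support_iff]; omega
    have h4 : (B : ℂ) * t ^ N + ∑ i ∈ g.support.erase N, (g.coeff i : ℂ) * t ^ i = 0 := by
      rw [hB, Finset.add_sum_erase _ (fun i => (g.coeff i : ℂ) * t ^ i) hNs, ← hg,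
        aeval_def, eval₂_eq_sum, Polynomial.sum]
      simp
    have h5 : ∑ i ∈ g.support.erase N, (g.coeff i : ℂ) * (t ^ i * z)
        = (∑ i ∈ g.support.erase N, (g.coeff i : ℂ) * t ^ i) * z := by
      rw [Finset.sum_mul]
      exact Finset.sum_congr rfl fun _ _ => by ring
    rw [h5]
    push_cast
    linear_combination z * h4

theorem reduce (t : ℂ) (ht : ‖t‖ < 1) (g : ℤ[X]) (N : ℕ) (hg : aeval t g = 0)
    (hN : ∑ i ∈ g.support.erase N, |g.coeff i| < g.coeff N) (M : ℕ) (hM : (g.coeff N) ^ 2 = M)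
    (K : ℕ) : ∀ (a : ℕ → ℤ) (_ : EvPer a) (_ : ∀ k, |a k| ≤ K) (y : ℂ) (_ : Val t a y),
    ∃ (b : ℕ → ℤ) (L : ℕ), EvPer b ∧ (∀ k, |b k| ≤ M) ∧ Val t b (t ^ L * y) := by
  induction K with
  | zero =>
    intro a ha hb y hy
    exact ⟨a, 0, ha, fun k => (hb k).trans (by simp), by simpa using hy⟩
  | succ K ih =>
    intro a ha hb y hy
    by_cases h : K + 1 ≤ M
    · exact ⟨a, 0, ha, fun k => (hb k).trans (by exact_mod_cast h), by simpa using hy⟩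
    · obtain ⟨b, hb1, hb2, hb3⟩ := reduce_step t ht g N hg hN K (by rw [hM]; exact_mod_cast (by omega))
        a ha (by simpa using hb) y hy
      obtain ⟨c, L, hc1, hc2, hc3⟩ := ih b hb1 hb2 _ hb3
      exact ⟨c, L + N, hc1, hc2, by rwa [pow_add, mul_assoc]⟩

/-- Values of eventually periodic expansions with arbitrary digits. -/
def PerInf (β : ℂ) (x : ℂ) : Prop :=
  ∃ (L : ℕ) (a : ℕ → ℤ), EvPer a ∧ Val β⁻¹ a (β⁻¹ ^ L * x)

theorem PerInf.add {β x y : ℂ} (hx : PerInf β x) (hy : PerInf β y) : PerInf β (x + y) := by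
  obtain ⟨L, a, ha, h⟩ := hx
  obtain ⟨M, b, hb, h'⟩ := hy
  refine ⟨L + M, _, (ha.shf M).map₂ (hb.shf L) (· + ·), ?_⟩
  convert (h.shf M).add (h'.shf L) using 1
  ring

theorem PerInf.mul_int {β x : ℂ} (hx : PerInf β x) (c : ℤ) : PerInf β (c * x) := by
  obtain ⟨L, a, ha, h⟩ := hx
  refine ⟨L, _, ha.map (c * ·), ?_⟩
  convert h.mul_int c using 1
  ring

theorem PerInf.mul_inv {β x : ℂ} (hx : PerInf β x) : PerInf β (β⁻¹ * x) := by
  obtain ⟨L, a, ha, h⟩ := hx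
  refine ⟨L, _, ha.shf 1, ?_⟩
  convert h.shf 1 using 1
  ring

theorem PerInf.mul_base {β x : ℂ} (hβ : β ≠ 0) (hx : PerInf β x) : PerInf β (β * x) := by
  obtain ⟨L, a, ha, h⟩ := hx
  refine ⟨L + 1, a, ha, ?_⟩
  convert h using 1
  rw [pow_succ]
  field_simp

theorem PerInf.mul_ring {β : ℂ} (hβ : β ≠ 0) (r : ℂ)
    (hr : r ∈ Subring.closure ({β, β⁻¹} : Set ℂ)) : ∀ x, PerInf β x → PerInf β (r * x) := by
  induction hr using Subring.closure_induction with
  | mem y hy =>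
    intro x hx
    rcases hy with rfl | rfl
    · exact hx.mul_base hβ
    · exact hx.mul_inv
  | zero => intro x hx; simpa using hx.mul_int 0
  | one => intro x hx; simpa using hx
  | add y z _ _ hy hz => intro x hx; rw [add_mul]; exact (hy x hx).add (hz x hx)
  | neg y _ hy => intro x hx; rw [neg_mul]; simpa using (hy x hx).mul_int (-1)
  | mul y z _ _ hy hz => intro x hx; rw [mul_assoc]; exact hy _ (hz x hx)

theorem PerInf.geom {β : ℂ} (hβ : 1 < ‖β‖) (n : ℕ) (hn : 1 ≤ n) : PerInf β (β ^ n - 1)⁻¹ := by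
  have hβ0 : β ≠ 0 := by rintro rfl; simp at hβ; linarith
  have ht : ‖β⁻¹‖ < 1 := by rw [norm_inv]; exact inv_lt_one_of_one_lt₀ hβ
  have hβn : β ^ n - 1 ≠ 0 := by
    intro h
    have h1 : ‖β ^ n‖ = 1 := by rw [sub_eq_zero.1 h]; simp
    rw [norm_pow] at h1
    exact absurd h1 (one_lt_pow₀ hβ (by omega)).ne'
  set a : ℕ → ℤ := fun k => if n ∣ k then 1 else 0 with ha
  have hE : EvPer a := ⟨0, n, hn, fun k _ => by simp [ha]⟩
  have hV := hE.val ht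
  set y := ∑' k, (a k : ℂ) * β⁻¹ ^ k
  have he : Val β⁻¹ (fun k => if k = 0 then 1 else 0) 1 := by
    unfold Val
    convert hasSum_single 0 ?_ using 1
    · simp
    · intro k hk
      simp [hk]
  have hae : a = fun k => (if k = 0 then 1 else 0) + shf n a k := by
    funext k
    simp only [ha, shf]
    by_cases hk : n ≤ k
    · rw [if_pos hk, if_neg (show ¬ k = 0 by omega), zero_add]
      congr 1
      rw [eq_iff_iff, Nat.dvd_sub_self_right]
      constructor
      · exact fun h => Or.inl h
      · rintro (h | h)
        · exact h
        · rw [show k = n by omega]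
    · rw [if_neg hk, add_zero]
      congr 1
      rw [eq_iff_iff]
      constructor
      · intro h
        exact Nat.eq_zero_of_dvd_of_lt h (by omega)
      · rintro rfl; simp
  have hV2 := he.add (hV.shf n)
  rw [← hae] at hV2
  have hy : y = 1 + β⁻¹ ^ n * y := HasSum.unique hV hV2
  refine ⟨0, _, hE.shf n, ?_⟩
  convert hV.shf n using 1
  rw [pow_zero, one_mul]
  apply inv_eq_of_mul_eq_one_right
  have : β ^ n * β⁻¹ ^ n = 1 := by rw [← mul_pow, mul_inv_cancel₀ hβ0, one_pow]
  linear_combination y * this + hy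

end Helpers

theorem evPer_mem (β : ℂ) (hβ : 1 < ‖β‖) (a : ℕ → ℤ) (ha : EvPer a) :
    ∑' k, (a k : ℂ) * β⁻¹ ^ k ∈ Subfield.closure ({β} : Set ℂ) := by
  have ht : ‖β⁻¹‖ < 1 := by rw [norm_inv]; exact inv_lt_one_of_one_lt₀ hβ
  set F := Subfield.closure ({β} : Set ℂ)
  set t := β⁻¹
  have htF : t ∈ F := inv_mem (Subfield.subset_closure (by simp))
  have hfin : ∀ (c : ℕ → ℤ) (n : ℕ), ∑ k ∈ Finset.range n, (c k : ℂ) * t ^ k ∈ F := fun c n =>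
    sum_mem fun k _ => mul_mem (intCast_mem _ _) (pow_mem htF _)
  have hs : ∀ c : ℕ → ℤ, EvPer c → ∀ n, ∑' k, (c k : ℂ) * t ^ k
      = ∑ k ∈ Finset.range n, (c k : ℂ) * t ^ k + t ^ n * ∑' k, (c (k + n) : ℂ) * t ^ k := by
    intro c hc n
    have h1 := (hc.val ht).summable
    rw [← h1.sum_add_tsum_nat_add n, ← tsum_mul_left]
    congr 2
    funext k
    rw [pow_add]; ring
  have ha' := ha
  obtain ⟨N, p, hp, h⟩ := ha
  rw [hs a ha' N]
  refine add_mem (hfin _ _) (mul_mem (pow_mem htF _) ?_)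
  have hc : EvPer (fun k => a (k + N)) := ⟨0, p, hp, fun k _ => by
    simp only
    rw [show k + p + N = (k + N) + p by ring, h _ (by omega)]⟩
  have h2 := hs _ hc p
  have h3 : (fun k => ((a (k + p + N) : ℤ) : ℂ) * t ^ k) = fun k => ((a (k + N) : ℤ) : ℂ) * t ^ k := by
    funext k
    rw [show k + p + N = (k + N) + p by ring, h _ (by omega)]
  simp only [h3] at h2
  set z := ∑' k, ((a (k + N) : ℤ) : ℂ) * t ^ k
  have h4 : (1 - t ^ p) ≠ 0 := by
    intro h0
    have h5 : ‖t ^ p‖ = 1 := by rw [← sub_eq_zero.1 h0]; simp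
    rw [norm_pow] at h5
    exact absurd h5 (pow_lt_one₀ (norm_nonneg _) ht (by omega)).ne
  have h5 : z = (∑ k ∈ Finset.range p, ((a (k + N) : ℤ) : ℂ) * t ^ k) / (1 - t ^ p) := by
    rw [eq_div_iff h4]
    linear_combination h2
  rw [h5]
  exact div_mem (hfin (fun k => a (k + N)) p) (sub_mem (one_mem _) (pow_mem htF _))

theorem perInf_of_mem (β : ℂ) (hβalg : IsAlgebraic ℚ β) (hβ : 1 < ‖β‖) (x : ℂ)
    (hx : x ∈ Subfield.closure ({β} : Set ℂ)) : PerInf β x := by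
  have hβ0 : β ≠ 0 := by rintro rfl; simp at hβ; linarith
  obtain ⟨q, hq, hqx⟩ := exists_mul_mem β hβalg x hx
  obtain ⟨n, hn, w, hw, e⟩ := exists_pow_sub_one β hβ0 hβalg q hq
  have hβn : β ^ n - 1 ≠ 0 := by
    intro h
    have h1 : ‖β ^ n‖ = 1 := by rw [sub_eq_zero.1 h]; simp
    rw [norm_pow] at h1
    exact absurd h1 (one_lt_pow₀ hβ (by omega)).ne'
  have h := PerInf.mul_ring hβ0 _ (mul_mem hw hqx) _ (PerInf.geom hβ n hn)
  have e2 : w * (q * x) * (β ^ n - 1)⁻¹ = x := by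
    rw [mul_inv_eq_iff_eq_mul₀ hβn, e]; ring
  rwa [e2] at h

/-- Kala–Vávra theorem: for an algebraic number `β` with `|β| > 1` and no
Galois conjugate of modulus `1`, there is a finite alphabet `A ⊂ ℤ` with
`ℚ(β) = Per_A(β)`. -/
theorem stmt_9
    (β : ℂ) (hβalg : IsAlgebraic ℚ β) (hβ : 1 < ‖β‖)
    (hconj : ∀ z : ℂ, Polynomial.aeval z (minpoly ℚ β) = 0 → ‖z‖ ≠ 1) :
    ∃ A : Finset ℤ,
      ∀ x : ℂ,
        x ∈ Subfield.closure ({β} : Set ℂ) ↔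
        ∃ (L : ℤ) (a : ℕ → ℤ),
          (∀ k, a k ∈ A) ∧
          (∃ N p : ℕ, 1 ≤ p ∧ ∀ k, N ≤ k → a (k + p) = a k) ∧
          x = ∑' k : ℕ, (a k : ℂ) * β ^ (L - (k : ℤ)) := by
  have hβ0 : β ≠ 0 := by rintro rfl; simp at hβ; linarith
  have ht : ‖β⁻¹‖ < 1 := by rw [norm_inv]; exact inv_lt_one_of_one_lt₀ hβ
  obtain ⟨g, N, hg, hN⟩ := dom_inv β hβ0 hconj
  obtain ⟨M, hM⟩ := Int.eq_ofNat_of_zero_le (sq_nonneg (g.coeff N))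
  have hpow : ∀ (L : ℤ) (a : ℕ → ℤ), ∑' k : ℕ, (a k : ℂ) * β ^ (L - (k : ℤ))
      = β ^ L * ∑' k, (a k : ℂ) * β⁻¹ ^ k := by
    intro L a
    rw [← tsum_mul_left]
    congr 1
    funext k
    rw [zpow_sub₀ hβ0, zpow_natCast, inv_pow]
    ring
  refine ⟨Finset.Icc (-(M : ℤ)) M, fun x => ⟨?_, ?_⟩⟩
  · intro hx
    obtain ⟨L, a, ha, hV⟩ := perInf_of_mem β hβalg hβ x hx
    obtain ⟨K, hK⟩ := ha.bounded
    obtain ⟨b, L', hbE, hbM, hbV⟩ := reduce β⁻¹ ht g N hg hN M hM K a ha hK _ hV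
    refine ⟨((L' + L : ℕ) : ℤ), b, fun k => ?_, hbE, ?_⟩
    · rw [Finset.mem_Icc]
      exact abs_le.1 (hbM k)
    · rw [hpow, HasSum.tsum_eq hbV, zpow_natCast, ← mul_assoc (β⁻¹ ^ L'), ← pow_add, ← mul_assoc,
        ← mul_pow, mul_inv_cancel₀ hβ0, one_pow, one_mul]
  · rintro ⟨L, a, -, hE, rfl⟩
    rw [hpow]
    exact mul_mem (zpow_mem (Subfield.subset_closure (by simp)) _) (evPer_mem β hβ a hE)
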